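/- If Γ = (V, T, s, r) is a network and there exists t ∈ T such that o(r(t)) = 0 and there does not exist A ∈ T⁰∖{{v} : v ∈ V} with r(t) ⊆ A, then Q_Γ is not *-congruence-free as a unary semigroup: Q_Γ admits a congruence preserving both the multiplication and the unary operation * which is neither the identity nor the universal congruence. -/

import Mathlib

/-!
The hypothesis on non-singleton members of `T⁰`, applied to `r(t)` itself, forces `r(t) = {v}`;
it also forces every `A ∈ T⁰` containing `v` to equal `{v}`, and since no source equals `r(t)`, the
vertex `v` lies in no source. So `v` is an isolated sink, and the congruence sought is the Rees
congruence of the ideal `I` generated by `e = [r(t)]`.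

*Compatibility with `*`.* Multiplying `e` on the right by generators yields only `0` and elements
`β⁻¹` with `β` a linear path ending at `v` (`Desc`), and each such element satisfies `β⁻¹ z = e`
for some `z` (`Desc.exists_mul_eq`). Hence every `a = x e y ∈ I` has a right identity
`z e y ∈ I` (`SinkIdeal.exists_right_id`). If `a L* f`, this right identity of `a` is also one of
`f`, so `f ∈ I`. In particular `a* ∈ I`; neither existence nor uniqueness of the idempotent in the
`L*`-class is needed.

*Properness.* For each `W`, the semigroup `Q_Γ` acts by partial maps on the paths ending at `W` of
the directed graph with vertex set `T⁰` and an edge `s(q) → r(q)` for each `q ∈ T` (`act`). Taking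
`W = r(t)` shows `e ≠ 0`, so `I` is not a single point; taking `W = s(t)`, the element `e`
acts as the empty map because `v` is a sink, whereas `[s(t)]` does not, so `[s(t)] ∉ I`.
-/

namespace NetworkSemigroup

/-- A network: vertices `V`, relations `T`, with source and range maps assigning to each
relation disjoint nonempty subsets of `V`. -/
structure Network (V T : Type) where
  s : T → Set V
  r : T → Set V
  s_nonempty : ∀ t, (s t).Nonempty
  r_nonempty : ∀ t, (r t).Nonempty
  disj : ∀ t, s t ∩ r t = ∅

variable {V T : Type}

/-- Membership in `T⁰`: sources and ranges of relations, together with singletons of vertices. -/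
def Network.InT0 (N : Network V T) (A : Set V) : Prop :=
  (∃ t, A = N.s t) ∨ (∃ t, A = N.r t) ∨ (∃ v : V, A = {v})

/-- The set `T⁰` as a type. -/
def Network.T0 (N : Network V T) : Type := { A : Set V // N.InT0 A }

/-- The generating set `X = T ∪ T⁰ ∪ T⁻¹ ∪ {0}` of the presentation of `Q_Γ`. -/
inductive Gen (N : Network V T) : Type
  | pos : T → Gen N
  | neg : T → Gen N
  | ver : N.T0 → Gen N
  | zero : Gen N

namespace Gen

variable {N : Network V T}

/-- The source (as a set of vertices) of a generator. -/
def srcSet : Gen N → Set V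
  | .pos t => N.s t
  | .neg t => N.r t
  | .ver A => A.1
  | .zero => ∅

/-- The range (as a set of vertices) of a generator. -/
def rngSet : Gen N → Set V
  | .pos t => N.r t
  | .neg t => N.s t
  | .ver A => A.1
  | .zero => ∅

/-- The source of a generator, as the corresponding element of `T⁰`. -/
def srcGen : Gen N → Gen N
  | .pos t => .ver ⟨N.s t, Or.inl ⟨t, rfl⟩⟩
  | .neg t => .ver ⟨N.r t, Or.inr (Or.inl ⟨t, rfl⟩)⟩
  | .ver A => .ver A
  | .zero => .zero

/-- The range of a generator, as the corresponding element of `T⁰`. -/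
def rngGen : Gen N → Gen N
  | .pos t => .ver ⟨N.r t, Or.inr (Or.inl ⟨t, rfl⟩)⟩
  | .neg t => .ver ⟨N.s t, Or.inl ⟨t, rfl⟩⟩
  | .ver A => .ver A
  | .zero => .zero

end Gen

open FreeSemigroup

/-- The defining relations (NR1)–(NR6) of the presentation of `Q_Γ`, as a binary relation on
the free semigroup over the generators. -/
inductive NRel (N : Network V T) : FreeSemigroup (Gen N) → FreeSemigroup (Gen N) → Prop
  | nr1l (g : Gen N) (hg : g ≠ .zero) : NRel N (of g.srcGen * of g) (of g)
  | nr1r (g : Gen N) (hg : g ≠ .zero) : NRel N (of g * of g.rngGen) (of g)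
  | nr2 (g₁ g₂ : Gen N) (h₁ : g₁ ≠ .zero) (h₂ : g₂ ≠ .zero)
      (h : g₁.rngSet ∩ g₂.srcSet = ∅) : NRel N (of g₁ * of g₂) (of .zero)
  | nr3 (t₁ t₂ : T) (h : t₁ ≠ t₂) :
      NRel N (of (.neg t₁) * of (.pos t₂)) (of .zero)
  | nr4 (t : T) :
      NRel N (of (.neg t) * of (.pos t)) (of (.ver ⟨N.r t, Or.inr (Or.inl ⟨t, rfl⟩)⟩))
  | nr5 (t : T) (A : N.T0) (h : A.1 ≠ N.s t) :
      NRel N (of (.neg t) * of (.ver A)) (of .zero)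
  | nr6l (x : Gen N) : NRel N (of .zero * of x) (of .zero)
  | nr6r (x : Gen N) : NRel N (of x * of .zero) (of .zero)

/-- The congruence on the free semigroup generated by the defining relations. -/
def QCon (N : Network V T) : Con (FreeSemigroup (Gen N)) := conGen (NRel N)

/-- The semigroup `Q_Γ` given by the presentation `⟨X : R⟩`. -/
abbrev QGamma (N : Network V T) : Type := (QCon N).Quotient

/-- The congruence class of a word. -/
def Qofw {N : Network V T} (w : FreeSemigroup (Gen N)) : QGamma N := (w : (QCon N).Quotient)

/-- The zero element `[0]` of `Q_Γ`. -/
def Qzero (N : Network V T) : QGamma N := Qofw (of .zero)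

/-- Path symbols: elements of `T ∪ T⁰`. -/
def PSym (N : Network V T) : Type := T ⊕ N.T0

namespace PSym

variable {N : Network V T}

/-- The source of a path symbol. -/
def src : PSym N → Set V
  | Sum.inl t => N.s t
  | Sum.inr A => A.1

/-- The range of a path symbol. -/
def rng : PSym N → Set V
  | Sum.inl t => N.r t
  | Sum.inr A => A.1

/-- The generator corresponding to a path symbol. -/
def toGen : PSym N → Gen N
  | Sum.inl t => Gen.pos t
  | Sum.inr A => Gen.ver A

/-- The generator corresponding to the inverse of a path symbol (`t ↦ t⁻¹`, `A ↦ A`). -/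
def toInvGen : PSym N → Gen N
  | Sum.inl t => Gen.neg t
  | Sum.inr A => Gen.ver A

/-- The path symbol is the element of `T⁰` given by the set `B`. -/
def IsVerOf : PSym N → Set V → Prop
  | Sum.inl _, _ => False
  | Sum.inr A, B => A.1 = B

end PSym

/-- `L` is a path: a nonempty sequence of elements of `T ∪ T⁰` in which the range of each
symbol meets the source of the next one. -/
def IsPath (N : Network V T) (L : List (PSym N)) : Prop :=
  L ≠ [] ∧ ∀ (i : ℕ) (a b : PSym N), L[i]? = some a → L[i + 1]? = some b →
    (a.rng ∩ b.src).Nonempty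

/-- `L` is linear: the range of each symbol equals the source of the next one. -/
def IsLinear (N : Network V T) (L : List (PSym N)) : Prop :=
  ∀ (i : ℕ) (a b : PSym N), L[i]? = some a → L[i + 1]? = some b → a.rng = b.src

/-- `L = t₁⋯tₙ` is reduced: `t_{n-1} ≠ s(tₙ)` and, for `1 < i < n`,
`t_{i-1} ≠ s(tᵢ)` and `t_{i+1} ≠ r(tᵢ)`. -/
def IsReducedPath (N : Network V T) (L : List (PSym N)) : Prop :=
  (∀ (i : ℕ) (a b : PSym N), L[i]? = some a → L[i + 1]? = some b →
      i + 2 = L.length → ¬ a.IsVerOf b.src) ∧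
  (∀ (i : ℕ) (a b c : PSym N), L[i]? = some a → L[i + 1]? = some b → L[i + 2]? = some c →
      ¬ a.IsVerOf b.src ∧ ¬ c.IsVerOf b.rng)

/-- `RP(Γ)`: reduced paths. -/
def RP (N : Network V T) : Set (List (PSym N)) :=
  { L | IsPath N L ∧ IsReducedPath N L }

/-- `RLP(Γ)`: reduced linear paths. -/
def RLP (N : Network V T) : Set (List (PSym N)) :=
  { L | IsPath N L ∧ IsLinear N L ∧ IsReducedPath N L }

/-- The source `s(α)` of a path. -/
def pathSrc (N : Network V T) (L : List (PSym N)) : Set V :=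
  match L.head? with
  | some a => a.src
  | none => ∅

/-- The range `r(α)` of a path. -/
def pathRng (N : Network V T) (L : List (PSym N)) : Set V :=
  match L.getLast? with
  | some a => a.rng
  | none => ∅

/-- The path is a single symbol from `T⁰` (an "empty path"). -/
def InT0Path (N : Network V T) (L : List (PSym N)) : Prop :=
  ∃ A : N.T0, L = [Sum.inr A]

/-- The word of the free semigroup determined by a nonempty list of generators
(by convention the empty list is sent to the word `0`). -/
def genWord {N : Network V T} : List (Gen N) → FreeSemigroup (Gen N)
  | [] => of .zero
  | a :: M => ⟨a, M⟩

/-- The word `α` of a path `α`. -/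
def word {N : Network V T} (L : List (PSym N)) : FreeSemigroup (Gen N) :=
  genWord (L.map PSym.toGen)

/-- The word `α⁻¹ = tₙ⁻¹⋯t₁⁻¹` of a path `α = t₁⋯tₙ`. -/
def invWord {N : Network V T} (L : List (PSym N)) : FreeSemigroup (Gen N) :=
  genWord (L.reverse.map PSym.toInvGen)

/-- `αβ⁻¹` is in right normal form: `α ∈ RP(Γ)`, `β ∈ RLP(Γ)` and `r(α) = r(β)`. -/
def IsRNF (N : Network V T) (α β : List (PSym N)) : Prop :=
  α ∈ RP N ∧ β ∈ RLP N ∧ pathRng N α = pathRng N β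

/-- The element `[αβ⁻¹]` of `Q_Γ`. -/
def Qrnf (N : Network V T) (α β : List (PSym N)) : QGamma N :=
  Qofw (word α * invWord β)

/-- The relation `L*`: `a L* b` iff for all `x, y ∈ S¹`, `ax = ay ⇔ bx = by`. -/
def LStar {S : Type*} [Semigroup S] (a b : S) : Prop :=
  ∀ x y : WithOne S,
    (a : WithOne S) * x = (a : WithOne S) * y ↔ (b : WithOne S) * x = (b : WithOne S) * y

/-- The relation `R*`: `a R* b` iff for all `x, y ∈ S¹`, `xa = ya ⇔ xb = yb`. -/
def RStar {S : Type*} [Semigroup S] (a b : S) : Prop :=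
  ∀ x y : WithOne S,
    x * (a : WithOne S) = y * (a : WithOne S) ↔ x * (b : WithOne S) = y * (b : WithOne S)

/-- Green's relation `R`: `a R b` iff `aS¹ = bS¹`. -/
def GreenR {S : Type*} [Semigroup S] (a b : S) : Prop :=
  (∃ x : WithOne S, (a : WithOne S) * x = b) ∧ ∃ y : WithOne S, (b : WithOne S) * y = a

/-- Green's relation `L`: `a L b` iff `S¹a = S¹b`. -/
def GreenL {S : Type*} [Semigroup S] (a b : S) : Prop :=
  (∃ x : WithOne S, x * (a : WithOne S) = b) ∧ ∃ y : WithOne S, y * (b : WithOne S) = a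

/-- Green's relation `H = L ∩ R`. -/
def GreenH {S : Type*} [Semigroup S] (a b : S) : Prop :=
  GreenL a b ∧ GreenR a b


open scoped Classical in
/-- In a right `*`-abundant semigroup, `a*` is the unique idempotent `L*`-related to `a`
(defined by choice; if no such idempotent exists we default to `a` itself). -/
noncomputable def starOf {S : Type*} [Semigroup S] (a : S) : S :=
  if h : ∃ e : S, IsIdempotentElem e ∧ LStar a e then h.choose else a

/-! ### Products in `Q_Γ` -/

section Products

variable {N : Network V T}

/-- The class of a generator in `Q_Γ`. -/
def gq (g : Gen N) : QGamma N := Qofw (of g)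

/-- The element of `T⁰` given by the range of `t`. -/
def rV (N : Network V T) (t : T) : N.T0 := ⟨N.r t, Or.inr (Or.inl ⟨t, rfl⟩)⟩

/-- The element of `T⁰` given by the source of `t`. -/
def sV (N : Network V T) (t : T) : N.T0 := ⟨N.s t, Or.inl ⟨t, rfl⟩⟩

lemma Qofw_mul (x y : FreeSemigroup (Gen N)) : Qofw (x * y) = Qofw x * Qofw y := rfl

lemma Qofw_eq_of_rel {x y : FreeSemigroup (Gen N)} (h : NRel N x y) : Qofw x = Qofw y :=
  (Con.eq _).2 (ConGen.Rel.of _ _ h)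

lemma gq_mul_eq {g h k : Gen N} (hr : NRel N (of g * of h) (of k)) : gq g * gq h = gq k :=
  Qofw_eq_of_rel hr

lemma T0_nonempty (A : N.T0) : A.1.Nonempty := by
  obtain ⟨A, ⟨t, rfl⟩ | ⟨t, rfl⟩ | ⟨v, rfl⟩⟩ := A
  exacts [N.s_nonempty t, N.r_nonempty t, Set.singleton_nonempty v]

lemma ver_mul_ver (A : N.T0) : gq (.ver A) * gq (.ver A) = gq (.ver A) :=
  gq_mul_eq (NRel.nr1l (.ver A) (by simp))

lemma neg_mul_ver_ne (q : T) (A : N.T0) (h : A.1 ≠ N.s q) :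
    gq (.neg q) * gq (.ver A) = gq .zero := gq_mul_eq (NRel.nr5 q A h)

lemma neg_mul_ver (q : T) : gq (.neg q) * gq (.ver (sV N q)) = gq (.neg q) :=
  gq_mul_eq (NRel.nr1r (.neg q) (by simp))

lemma ver_mul_neg (q : T) : gq (.ver (rV N q)) * gq (.neg q) = gq (.neg q) :=
  gq_mul_eq (NRel.nr1l (.neg q) (by simp))

lemma mul_zero_gq (y : QGamma N) : y * gq .zero = gq .zero := by
  induction y using Con.induction_on with | H w =>
  induction w using FreeSemigroup.recOnMul with
  | ih1 x => exact gq_mul_eq (NRel.nr6r x)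
  | ih2 x y _ hy =>
    change (gq x * Qofw y) * gq .zero = _
    rw [mul_assoc]
    change Qofw y * gq .zero = _ at hy
    rw [hy]
    exact gq_mul_eq (NRel.nr6r x)

lemma zero_mul_gq (g : Gen N) : gq .zero * gq g = gq .zero := gq_mul_eq (NRel.nr6l g)

end Products

/-! ### The ideal generated by an isolated sink -/

section Sink

variable {N : Network V T}

/-- The elements `β⁻¹`, where `β` is a linear path ending at `r(t)`: one starts with `r(t)` and
appends inverse symbols `q⁻¹` with matching source. -/
inductive Desc (N : Network V T) (t : T) : QGamma N → Prop
  | base : Desc N t (gq (.ver (rV N t)))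
  | step (b : QGamma N) (q : T) : Desc N t b → b * gq (.ver (rV N q)) = b →
      Desc N t (b * gq (.neg q))

/-- Every `β⁻¹` has `β` as a right inverse relative to `r(t)`, by `q⁻¹q = r(q)`. -/
lemma Desc.exists_mul_eq {t : T} {b : QGamma N} (h : Desc N t b) :
    ∃ z, b * z = gq (.ver (rV N t)) := by
  induction h with
  | base => exact ⟨_, ver_mul_ver _⟩
  | step b q _ hb ih =>
    obtain ⟨z, hz⟩ := ih
    refine ⟨gq (.pos q) * z, ?_⟩
    have h4 : gq (.neg q) * gq (.pos q) = gq (.ver (rV N q)) := gq_mul_eq (NRel.nr4 q)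
    rw [mul_assoc, ← mul_assoc (gq (.neg q)), h4, ← mul_assoc, hb, hz]

/-- The elements of `Desc`, together with `0`, are closed under right multiplication by a
generator when `r(t)` is disjoint from every source and from every other member of `T⁰`. -/
lemma Desc.mul_gq {t : T} (hs : ∀ q, N.r t ∩ N.s q = ∅)
    (hA : ∀ A : N.T0, A.1 = N.r t ∨ N.r t ∩ A.1 = ∅)
    {b : QGamma N} (h : Desc N t b) (g : Gen N) :
    b * gq g = gq .zero ∨ Desc N t (b * gq g) := by
  cases h with
  | base =>
    match g with
    | .pos q =>
      exact Or.inl (gq_mul_eq (NRel.nr2 _ _ (by simp) (by simp) (hs q)))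
    | .neg q =>
      rcases hA (rV N q) with h | h
      · right
        refine .step _ _ .base ?_
        have : rV N q = rV N t := Subtype.ext h
        rw [this, ver_mul_ver]
      · exact Or.inl (gq_mul_eq (NRel.nr2 _ _ (by simp) (by simp) h))
    | .ver A =>
      rcases hA A with h | h
      · right
        have : A = rV N t := Subtype.ext h
        rw [this, ver_mul_ver]
        exact .base
      · exact Or.inl (gq_mul_eq (NRel.nr2 _ _ (by simp) (by simp) h))
    | .zero => exact Or.inl (mul_zero_gq _)
  | step b q hb hq =>
    match g with
    | .pos p =>
      by_cases hpq : q = p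
      · subst hpq
        have h4 : gq (.neg q) * gq (.pos q) = gq (.ver (rV N q)) := gq_mul_eq (NRel.nr4 q)
        right
        rwa [mul_assoc, h4, hq]
      · left
        have h3 : gq (.neg q) * gq (.pos p) = (gq .zero : QGamma N) :=
          gq_mul_eq (NRel.nr3 q p hpq)
        rw [mul_assoc, h3, mul_zero_gq]
    | .neg p =>
      by_cases hp : N.r p = N.s q
      · right
        refine .step _ _ (.step _ _ hb hq) ?_
        have : rV N p = sV N q := Subtype.ext hp
        rw [mul_assoc, this, neg_mul_ver]
      · left
        rw [← ver_mul_neg p, mul_assoc, ← mul_assoc (gq (.neg q)), neg_mul_ver_ne q (rV N p) hp,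
          zero_mul_gq, mul_zero_gq]
    | .ver A =>
      by_cases hp : A.1 = N.s q
      · right
        have : A = sV N q := Subtype.ext hp
        rw [mul_assoc, this, neg_mul_ver]
        exact .step _ _ hb hq
      · left
        rw [mul_assoc, neg_mul_ver_ne q A hp, mul_zero_gq]
    | .zero => exact Or.inl (mul_zero_gq _)

lemma Desc.mul {t : T} (hs : ∀ q, N.r t ∩ N.s q = ∅)
    (hA : ∀ A : N.T0, A.1 = N.r t ∨ N.r t ∩ A.1 = ∅)
    (b y : QGamma N) (h : b = gq .zero ∨ Desc N t b) :
    b * y = gq .zero ∨ Desc N t (b * y) := by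
  have key : ∀ (b : QGamma N) (g : Gen N), b = gq .zero ∨ Desc N t b →
      b * gq g = gq .zero ∨ Desc N t (b * gq g) := by
    rintro b g (rfl | h)
    · exact Or.inl (zero_mul_gq g)
    · exact h.mul_gq hs hA g
  induction y using Con.induction_on with | H w =>
  induction w using FreeSemigroup.recOnMul generalizing b with
  | ih1 x => exact key b x h
  | ih2 x y _ hy =>
    have := hy (b * gq x) (key b x h)
    rw [mul_assoc] at this
    exact this

/-- The two-sided ideal generated by `[r(t)]`. As `[r(t)]` is idempotent, every element is of the
form `x r(t) y` with `x, y ∈ Q_Γ`, so no identity needs to be adjoined. -/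
def SinkIdeal (N : Network V T) (t : T) (a : QGamma N) : Prop :=
  ∃ x y, a = x * gq (.ver (rV N t)) * y

lemma SinkIdeal.mul_left {t : T} {a : QGamma N} (h : SinkIdeal N t a) (b : QGamma N) :
    SinkIdeal N t (b * a) := by
  obtain ⟨x, y, rfl⟩ := h
  exact ⟨b * x, y, by simp only [mul_assoc]⟩

lemma SinkIdeal.mul_right {t : T} {a : QGamma N} (h : SinkIdeal N t a) (b : QGamma N) :
    SinkIdeal N t (a * b) := by
  obtain ⟨x, y, rfl⟩ := h
  exact ⟨x, y * b, by simp only [mul_assoc]⟩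

lemma SinkIdeal.self (t : T) : SinkIdeal N t (gq (.ver (rV N t))) :=
  ⟨gq (.ver (rV N t)), gq (.ver (rV N t)), by rw [ver_mul_ver, ver_mul_ver]⟩

lemma SinkIdeal.zero (t : T) : SinkIdeal N t (gq .zero) :=
  ⟨gq .zero, gq .zero, by rw [zero_mul_gq, zero_mul_gq]⟩

lemma SinkIdeal.exists_right_id {t : T} (hs : ∀ q, N.r t ∩ N.s q = ∅)
    (hA : ∀ A : N.T0, A.1 = N.r t ∨ N.r t ∩ A.1 = ∅)
    {a : QGamma N} (h : SinkIdeal N t a) : ∃ f, SinkIdeal N t f ∧ a * f = a := by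
  obtain ⟨x, y, rfl⟩ := h
  rcases Desc.mul hs hA _ y (Or.inr Desc.base) with h0 | hD
  · refine ⟨gq .zero, SinkIdeal.zero t, ?_⟩
    rw [mul_assoc x, h0, mul_zero_gq, mul_zero_gq]
  · obtain ⟨z, hz⟩ := hD.exists_mul_eq
    refine ⟨z * gq (.ver (rV N t)) * y, ⟨z, y, rfl⟩, ?_⟩
    calc x * gq (.ver (rV N t)) * y * (z * gq (.ver (rV N t)) * y)
        = x * ((gq (.ver (rV N t)) * y * z) * gq (.ver (rV N t))) * y := by
          simp only [mul_assoc]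
      _ = x * gq (.ver (rV N t)) * y := by rw [hz, ver_mul_ver]

lemma SinkIdeal.star {t : T} (hs : ∀ q, N.r t ∩ N.s q = ∅)
    (hA : ∀ A : N.T0, A.1 = N.r t ∨ N.r t ∩ A.1 = ∅)
    {a : QGamma N} (h : SinkIdeal N t a) : SinkIdeal N t (starOf a) := by
  unfold starOf
  split_ifs with he
  · obtain ⟨f, hf, haf⟩ := h.exists_right_id hs hA
    -- `a f = a 1` transfers along `L*` to any element related to `a`.
    have h1 := (he.choose_spec.2 (f : WithOne (QGamma N)) 1).1 (by
      rw [mul_one, ← WithOne.coe_mul, haf])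
    rw [mul_one, ← WithOne.coe_mul, WithOne.coe_inj] at h1
    rw [← h1]
    exact hf.mul_left _
  · exact h

/-- The Rees congruence of the ideal generated by `[r(t)]`. -/
def sinkCon (N : Network V T) (t : T) : Con (QGamma N) where
  r a b := a = b ∨ (SinkIdeal N t a ∧ SinkIdeal N t b)
  iseqv := by
    refine ⟨fun a => Or.inl rfl, ?_, ?_⟩
    · rintro a b (rfl | ⟨h, h'⟩)
      · exact Or.inl rfl
      · exact Or.inr ⟨h', h⟩
    · rintro a b c (rfl | ⟨h, h'⟩) (rfl | ⟨k, k'⟩)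
      · exact Or.inl rfl
      · exact Or.inr ⟨k, k'⟩
      · exact Or.inr ⟨h, h'⟩
      · exact Or.inr ⟨h, k'⟩
  mul' := by
    rintro a b c d (rfl | ⟨h, h'⟩) (rfl | ⟨k, k'⟩)
    · exact Or.inl rfl
    · exact Or.inr ⟨k.mul_left _, k'.mul_left _⟩
    · exact Or.inr ⟨h.mul_right _, h'.mul_right _⟩
    · exact Or.inr ⟨h.mul_right _, h'.mul_right _⟩

end Sink

/-! ### An action on paths -/

section Model

open scoped Classical

/-- The source of a list of relations regarded as a path ending at `W`. -/
def lsrc (N : Network V T) (W : Set V) : List T → Set V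
  | [] => W
  | q :: _ => N.s q

/-- The partial map on paths ending at `W` given by a generator: `q` prepends `q`, `q⁻¹` removes an
initial `q`, and `A` is the identity on paths with source `A`. A path is encoded as a list; since
each map tests that `r(q)` is the source of the remaining list, lists that are not paths are
harmless. The value `none` means undefined. -/
noncomputable def gact (N : Network V T) (W : Set V) : Gen N → List T → Option (List T)
  | .pos q, l => if N.r q = lsrc N W l then some (q :: l) else none
  | .neg _, [] => none
  | .neg q, p :: l => if q = p ∧ N.r q = lsrc N W l then some l else none
  | .ver A, l => if A.1 = lsrc N W l then some l else none
  | .zero, _ => none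

/-- The action on `Option (List T)` of words of generators; `none` is a fixed point. -/
noncomputable def act (N : Network V T) (W : Set V) :
    FreeSemigroup (Gen N) →ₙ* Function.End (Option (List T)) :=
  FreeSemigroup.lift (fun g o => o.bind (gact N W g))

variable {N : Network V T} {W : Set V}

lemma act_of (g : Gen N) (o : Option (List T)) : act N W (of g) o = o.bind (gact N W g) := rfl

lemma act_mul (x y : FreeSemigroup (Gen N)) (o : Option (List T)) :
    act N W (x * y) o = act N W x (act N W y o) := by
  rw [map_mul]; rfl

lemma act_none (w : FreeSemigroup (Gen N)) : act N W w none = none := by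
  induction w using FreeSemigroup.recOnMul with
  | ih1 x => simp [act_of]
  | ih2 x y hx hy => rw [act_mul, hy, hx]

lemma lsrc_of_gact {g : Gen N} {l l' : List T} (h : gact N W g l = some l') :
    lsrc N W l' = g.srcSet := by
  match g, l with
  | .pos q, l =>
    simp only [gact] at h
    split_ifs at h
    cases h; rfl
  | .neg q, [] => simp [gact] at h
  | .neg q, p :: l =>
    simp only [gact] at h
    split_ifs at h with hc
    cases h; exact hc.2.symm
  | .ver A, l =>
    simp only [gact] at h
    split_ifs at h with hc
    cases h; exact hc.symm
  | .zero, l => simp [gact] at h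

lemma lsrc_of_gact_dom {g : Gen N} {l l' : List T} (h : gact N W g l = some l') :
    lsrc N W l = g.rngSet := by
  match g, l with
  | .pos q, l =>
    simp only [gact] at h
    split_ifs at h with hc
    exact hc.symm
  | .neg q, [] => simp [gact] at h
  | .neg q, p :: l =>
    simp only [gact] at h
    split_ifs at h with hc
    rw [hc.1]; rfl
  | .ver A, l =>
    simp only [gact] at h
    split_ifs at h with hc
    exact hc.symm
  | .zero, l => simp [gact] at h

lemma srcSet_nonempty {g : Gen N} (hg : g ≠ .zero) : g.srcSet.Nonempty := by
  match g with
  | .pos q => exact N.s_nonempty q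
  | .neg q => exact N.r_nonempty q
  | .ver A => exact T0_nonempty A
  | .zero => exact absurd rfl hg

lemma srcGen_eq {g : Gen N} (hg : g ≠ .zero) : ∃ A : N.T0, g.srcGen = .ver A ∧ A.1 = g.srcSet := by
  match g with
  | .pos q => exact ⟨_, rfl, rfl⟩
  | .neg q => exact ⟨_, rfl, rfl⟩
  | .ver A => exact ⟨_, rfl, rfl⟩
  | .zero => exact absurd rfl hg

lemma rngGen_eq {g : Gen N} (hg : g ≠ .zero) : ∃ A : N.T0, g.rngGen = .ver A ∧ A.1 = g.rngSet := by
  match g with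
  | .pos q => exact ⟨_, rfl, rfl⟩
  | .neg q => exact ⟨_, rfl, rfl⟩
  | .ver A => exact ⟨_, rfl, rfl⟩
  | .zero => exact absurd rfl hg

/-- The defining relations hold in the action. -/
lemma act_rel {x y : FreeSemigroup (Gen N)} (h : NRel N x y) (o : Option (List T)) :
    act N W x o = act N W y o := by
  cases o with
  | none => rw [act_none, act_none]
  | some l =>
  cases h with
  | nr1l g hg =>
    obtain ⟨A, hA, hA'⟩ := srcGen_eq hg
    simp only [act_mul, act_of, hA, Option.bind_some]
    cases hgl : gact N W g l with
    | none => rfl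
    | some l' => simp [gact, lsrc_of_gact hgl, hA']
  | nr1r g hg =>
    obtain ⟨A, hA, hA'⟩ := rngGen_eq hg
    simp only [act_mul, act_of, hA, Option.bind_some]
    cases hgl : gact N W g l with
    | none =>
      simp only [gact]
      split_ifs
      · exact hgl
      · rfl
    | some l' =>
      have hv : gact N W (.ver A) l = some l := if_pos (hA'.trans (lsrc_of_gact_dom hgl).symm)
      rw [hv, Option.bind_some, hgl]
  | nr2 g₁ g₂ h₁ h₂ hd =>
    simp only [act_mul, act_of, Option.bind_some]
    cases hgl : gact N W g₂ l with
    | none => rfl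
    | some l' =>
      cases hgl' : gact N W g₁ l' with
      | none => simpa [gact] using hgl'
      | some l'' =>
        have h := lsrc_of_gact hgl
        rw [lsrc_of_gact_dom hgl'] at h
        rw [h, Set.inter_self] at hd
        exact absurd hd (srcSet_nonempty h₂).ne_empty
  | nr3 t₁ t₂ hne =>
    simp only [act_mul, act_of, Option.bind_some, gact]
    split_ifs
    · simp [gact, hne]
    · rfl
  | nr4 t =>
    simp only [act_mul, act_of, Option.bind_some, gact]
    split_ifs with hc
    · simp [gact, hc]
    · rfl
  | nr5 t A hA =>
    simp only [act_mul, act_of, Option.bind_some, gact]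
    split_ifs with hc
    · cases hgl : gact N W (.neg t) l with
      | none => simpa using hgl
      | some l' => exact absurd (hc.trans (lsrc_of_gact_dom hgl)) hA
    · rfl
  | nr6l g =>
    simp only [act_mul, act_of, Option.bind_some]
    cases gact N W g l <;> rfl
  | nr6r g => simp [act_mul, act_of, gact]

lemma act_eq_of_Qofw_eq (W : Set V) {x y : FreeSemigroup (Gen N)} (h : Qofw x = Qofw y)
    (o : Option (List T)) : act N W x o = act N W y o := by
  have hle : QCon N ≤ Con.ker (act N W) :=
    Con.conGen_le.2 fun x y hxy => funext fun o => act_rel hxy o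
  exact congrFun (hle ((Con.eq _).1 h)) o

/-- The path of length zero at `r(t)` is fixed by `[r(t)]` but not by `0`. -/
lemma gq_ver_ne_zero (t : T) : gq (.ver (rV N t)) ≠ gq .zero := by
  intro h
  have := act_eq_of_Qofw_eq (N.r t) h (some [])
  simp [act_of, gact, rV, lsrc] at this

/-- When no source equals `r(t)`, no path ending at `s(t)` starts at `r(t)`, so the ideal
generated by `[r(t)]` acts trivially on these paths, unlike `[s(t)]`. -/
lemma not_sinkIdeal_source {t : T} (h₁ : ∀ q : T, N.s q ≠ N.r t) :
    ¬ SinkIdeal N t (gq (.ver (sV N t))) := by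
  rintro ⟨x, y, h⟩
  induction x using Con.induction_on with | H x =>
  induction y using Con.induction_on with | H y =>
  have h' : Qofw (of (.ver (sV N t))) = Qofw (x * of (.ver (rV N t)) * y) := h
  have hv : ∀ o, act N (N.s t) (of (.ver (rV N t))) o = none := by
    intro o
    cases o with
    | none => exact act_none _
    | some l => cases l with
      | nil => simp [act_of, gact, rV, lsrc, (h₁ t).symm]
      | cons q l => simp [act_of, gact, rV, lsrc, (h₁ q).symm]
  have := act_eq_of_Qofw_eq (N.s t) h' (some [])
  rw [act_mul, act_mul, hv, act_none] at this
  simp [act_of, gact, sV, lsrc] at this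

end Model

/-- if `t ∈ T` satisfies `o(r(t)) = 0` and there is no non-singleton `A ∈ T⁰`
with `r(t) ⊆ A`, then `Q_Γ` is not `*`-congruence-free as a unary semigroup: it admits a
congruence preserving the multiplication and the unary operation `*` which is neither the
identity nor the universal congruence. -/
theorem QGamma_not_star_congruence_free (N : Network V T) (t : T)
    (h₁ : ∀ q : T, N.s q ≠ N.r t)
    (h₂ : ∀ A : Set V, N.InT0 A → (¬ ∃ v : V, A = {v}) → ¬ N.r t ⊆ A) :
    ∃ c : Con (QGamma N),
      (∀ a b : QGamma N, c a b → c (starOf a) (starOf b)) ∧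
      (∃ a b : QGamma N, c a b ∧ a ≠ b) ∧
      (∃ a b : QGamma N, ¬ c a b) := by
  have hsing : ∃ v : V, N.r t = {v} := by
    by_contra h
    exact h₂ (N.r t) (Or.inr (Or.inl ⟨t, rfl⟩)) h subset_rfl
  obtain ⟨v, hv⟩ := hsing
  have hA : ∀ A : N.T0, A.1 = N.r t ∨ N.r t ∩ A.1 = ∅ := by
    intro A
    by_cases hvA : v ∈ A.1
    · left
      by_cases hs : ∃ w : V, A.1 = {w}
      · obtain ⟨w, hw⟩ := hs
        rw [hw, Set.mem_singleton_iff] at hvA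
        rw [hw, hv, hvA]
      · exact absurd (by simpa [hv] using hvA) (h₂ A.1 A.2 hs)
    · right
      rw [hv]
      exact Set.singleton_inter_eq_empty.2 hvA
  have hs : ∀ q, N.r t ∩ N.s q = ∅ := fun q => (hA (sV N q)).resolve_left (h₁ q)
  refine ⟨sinkCon N t, ?_, ⟨gq (.ver (rV N t)), gq .zero, Or.inr ⟨.self t, .zero t⟩,
    gq_ver_ne_zero t⟩, ⟨gq (.ver (sV N t)), gq (.ver (rV N t)), ?_⟩⟩
  · rintro a b (rfl | ⟨ha, hb⟩)
    · exact Or.inl rfl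
    · exact Or.inr ⟨ha.star hs hA, hb.star hs hA⟩
  · rintro (h | ⟨h, -⟩)
    · exact not_sinkIdeal_source h₁ (h ▸ SinkIdeal.self t)
    · exact not_sinkIdeal_source h₁ h

end NetworkSemigroup
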